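/- For all integers 1 ≤ d < k and every ε > 0 there exists n0 such that the following holds for every n ≥ n0 and every real δ with 2^{−1/(k−d)} ≤ δ ≤ 1. Every k-graph G on n vertices with δ_d(G) ≥ (δ + ε)·binom(n−d, k−d) contains a tight-connected set of edges C ⊆ E(G) such that every d-element vertex set is contained in at least δ^{k−d}·binom(n−d, k−d) edges belonging to C. -/

import Mathlib

/-- A set `C` of edges of a `k`-graph is tight-connected: between any two edges of `C` there is
a finite sequence of edges from `C` in which consecutive edges intersect in `k−1` vertices. -/
def TightConn {V : Type*} [DecidableEq V] (k : ℕ) (C : Finset (Finset V)) : Prop :=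
  ∀ e ∈ C, ∀ f ∈ C, ∃ (m : ℕ) (w : ℕ → Finset V), w 0 = e ∧ w m = f ∧
    (∀ i ≤ m, w i ∈ C) ∧ (∀ i < m, ((w i) ∩ (w (i+1))).card = k - 1)

/-!
The link of a `d`-set `D` splits along the tight components of the `k`-graph, and the parts have
pairwise disjoint shadows, because two sets of the link that share all but one element extend `D`
to adjacent edges. The shadow of the whole link has at most `(n - d).choose (k - d - 1)` members, so
one part is at least as large compared with its shadow as the whole link is compared with this
bound. By Lovász's form of the Kruskal–Katona theorem such a part contains slightly more than the
proportion `δ ^ (k - d)`, hence more than half, of all `(k - d)`-sets disjoint from `D`.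

If `D` and `D'` share `d - 1` vertices, these majority parts both live on the `n - d + 1` vertices
outside `D ∩ D'`, so they have a common set `a`. The edges `a ∪ D` and `a ∪ D'` are adjacent, hence
the majority components of `D` and `D'` agree. As any two `d`-sets are linked by exchanging one
vertex at a time, a single tight component serves every `d`-set.
-/

section

open Finset
open scoped FinsetFamily

section Binomial

lemma exists_choose_le_lt_choose_add_one (m r : ℕ) :
    ∃ x, r ≤ x ∧ x.choose (r + 1) ≤ m ∧ m < (x + 1).choose (r + 1) := by
  induction m with
  | zero => exact ⟨r, le_rfl, by simp, by simp⟩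
  | succ m ih =>
    obtain ⟨x, hrx, hxm, hmx⟩ := ih
    rcases (Nat.succ_le_of_lt hmx).lt_or_eq with hlt | heq
    · exact ⟨x, hrx, hxm.trans m.le_succ, hlt⟩
    · have hpos : 0 < (x + 1).choose r := Nat.choose_pos (by lia)
      refine ⟨x + 1, by lia, heq.ge, ?_⟩
      rw [Nat.choose_succ_succ' (x + 1) r]
      lia

lemma cast_choose_add_one_mul {R : Type*} [Ring R] (m r : ℕ) :
    (m.choose (r + 1) : R) * (r + 1) = m.choose r * (m - r) := by
  rcases le_or_gt r m with hrm | hmr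
  · have h := congrArg (Nat.cast (R := R)) (Nat.choose_succ_right_eq m r)
    push_cast [hrm] at h
    exact h
  · simp [Nat.choose_eq_zero_of_lt hmr, Nat.choose_eq_zero_of_lt (hmr.trans r.lt_succ_self)]

lemma choose_add_one_lt_one_add_mul_choose {m r : ℕ} {η : ℝ} (hrm : r ≤ m)
    (hη : r + 1 < η * (m - r)) :
    ((m + 1).choose (r + 1) : ℝ) < (1 + η) * m.choose (r + 1) := by
  have hpos : (0 : ℝ) < m.choose r := mod_cast Nat.choose_pos hrm
  have hlt : (m.choose r : ℝ) < η * m.choose (r + 1) := by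
    refine lt_of_mul_lt_mul_right ?_ (by positivity : (0 : ℝ) ≤ r + 1)
    calc (m.choose r : ℝ) * (r + 1) < m.choose r * (η * (m - r)) := by gcongr
      _ = η * (m.choose r * (m - r)) := by ring
      _ = η * m.choose (r + 1) * (r + 1) := by rw [← cast_choose_add_one_mul]; ring
  rw [Nat.choose_succ_succ']
  push_cast
  linarith

lemma pow_mul_choose_le_choose {m r x : ℕ} {c : ℝ} (hc : 0 ≤ c) (h : c * m ≤ x - r) :
    c ^ (r + 1) * m.choose (r + 1) ≤ x.choose (r + 1) := by
  have hrx : (r : ℝ) ≤ x := sub_nonneg.1 ((by positivity : 0 ≤ c * m).trans h)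
  have hcast : ((x + 1 - (r + 1) : ℕ) : ℝ) = x - r := by
    rw [Nat.add_sub_add_right, Nat.cast_sub (mod_cast hrx)]
  calc c ^ (r + 1) * m.choose (r + 1)
      ≤ c ^ (r + 1) * ((m : ℝ) ^ (r + 1) / (r + 1).factorial) := by
        gcongr
        exact Nat.choose_le_pow_div _ _
    _ = (c * m) ^ (r + 1) / (r + 1).factorial := by rw [mul_pow]; ring
    _ ≤ (x - r) ^ (r + 1) / (r + 1).factorial := by gcongr
    _ ≤ x.choose (r + 1) := hcast ▸ Nat.pow_le_choose (r + 1) x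

lemma mul_sub_le_of_mul_choose_le {m r : ℕ} {N y c : ℝ} (hrm : r ≤ m)
    (hN : c * m.choose (r + 1) ≤ N) (hy : (r + 1) * N ≤ y * m.choose r) :
    c * (m - r) ≤ y := by
  have hpos : (0 : ℝ) < m.choose r := mod_cast Nat.choose_pos hrm
  refine le_of_mul_le_mul_right ?_ hpos
  calc c * (m - r) * m.choose r = (r + 1) * (c * m.choose (r + 1)) := by
        linear_combination -c * cast_choose_add_one_mul (R := ℝ) m r
    _ ≤ (r + 1) * N := by gcongr
    _ ≤ y * m.choose r := hy

lemma lt_of_two_add_mul_le_half_mul {m r : ℕ} {ε : ℝ} (hε : 0 < ε)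
    (h : (2 + ε) * (r + 1) ≤ ε / 2 * m) : r < m := by
  have hlt : ε / 2 * r < ε / 2 * m :=
    calc ε / 2 * r < (2 + ε) * (r + 1) := by gcongr <;> linarith
      _ ≤ ε / 2 * m := h
  exact Nat.cast_lt.1 (lt_of_mul_lt_mul_left hlt (half_pos hε).le)

lemma one_add_mul_pow_le_add_pow {δ η : ℝ} (hδ₀ : 0 ≤ δ) (hδ₁ : δ ≤ 1) (hη : 0 ≤ η) (r : ℕ) :
    (1 + η) * δ ^ (r + 1) ≤ (δ + η) ^ (r + 1) :=
  calc (1 + η) * δ ^ (r + 1) ≤ (1 + η) ^ (r + 1) * δ ^ (r + 1) := by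
        gcongr
        exact le_self_pow₀ (by linarith) r.succ_ne_zero
    _ = (δ + η * δ) ^ (r + 1) := by rw [← mul_pow]; ring
    _ ≤ (δ + η) ^ (r + 1) := by
        gcongr
        exact mul_le_of_le_one_right hη hδ₁

lemma half_le_pow_of_two_rpow_le {r : ℕ} (hr : r ≠ 0) {δ : ℝ} (h : (2 : ℝ) ^ (-1 / r : ℝ) ≤ δ) :
    1 / 2 ≤ δ ^ r :=
  calc (1 / 2 : ℝ) = ((2 : ℝ) ^ (-1 / r : ℝ)) ^ r := by
        rw [← Real.rpow_mul_natCast zero_le_two, div_mul_cancel₀ _ (mod_cast hr),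
          Real.rpow_neg_one, one_div]
    _ ≤ δ ^ r := by gcongr

end Binomial

section KruskalKatona

variable {α : Type*} [DecidableEq α] {𝒜 : Finset (Finset α)} {r : ℕ}

lemma shadow_map {β : Type*} [DecidableEq β] (f : α ↪ β) (𝒜 : Finset (Finset α)) :
    ∂ (𝒜.map (mapEmbedding f).toEmbedding) = (∂ 𝒜).map (mapEmbedding f).toEmbedding := by
  ext t
  simp only [mem_shadow_iff, mem_map, RelEmbedding.coe_toEmbedding, mapEmbedding_apply]
  constructor
  · rintro ⟨_, ⟨s, hs, rfl⟩, b, hb, rfl⟩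
    obtain ⟨a, ha, rfl⟩ := mem_map.1 hb
    exact ⟨s.erase a, ⟨s, hs, a, ha, rfl⟩, map_erase f s a⟩
  · rintro ⟨_, ⟨s, hs, a, ha, rfl⟩, rfl⟩
    exact ⟨s.map f, ⟨s, hs, rfl⟩, f a, mem_map_of_mem f ha, (map_erase f s a).symm⟩

lemma le_of_choose_le_choose_add_one {n x : ℕ} (hrx : r < x)
    (h : x.choose (r + 1) ≤ n.choose (r + 1)) : x ≤ n := by
  by_contra! hnx
  have hmono : (n + 1).choose (r + 1) ≤ x.choose (r + 1) := Nat.choose_le_choose _ hnx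
  have hpos : 0 < x.choose (r + 1) := Nat.choose_pos hrx
  rw [Nat.choose_succ_succ'] at hmono
  have hnr : n < r := Nat.choose_eq_zero_iff.1 (by lia)
  rw [Nat.choose_eq_zero_of_lt (hnr.trans r.lt_succ_self)] at h
  lia

theorem choose_le_card_shadow [Finite α] {x : ℕ} (h𝒜 : (𝒜 : Set (Finset α)).Sized (r + 1))
    (hrx : r < x) (hx : x.choose (r + 1) ≤ #𝒜) : x.choose r ≤ #(∂ 𝒜) := by
  have := Fintype.ofFinite α
  have hxn : x ≤ Fintype.card α := le_of_choose_le_choose_add_one hrx (hx.trans h𝒜.card_le)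
  let f := (Fintype.equivFin α).toEmbedding
  have hsized : Set.Sized (r + 1)
      (𝒜.map (mapEmbedding f).toEmbedding : Set (Finset (Fin (Fintype.card α)))) := by
    intro t ht
    obtain ⟨s, hs, rfl⟩ := mem_map.1 (mem_coe.1 ht)
    exact (card_map f).trans (h𝒜 hs)
  have hshadow := kruskal_katona_lovasz_form (i := 1) (by lia) hrx hxn hsized
    (hx.trans_eq (card_map _).symm)
  rwa [Function.iterate_one, shadow_map, card_map, Nat.succ_sub_one] at hshadow

lemma exists_choose_le_card_and_mul_card_le_mul_card_shadow [Finite α]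
    (h𝒜 : (𝒜 : Set (Finset α)).Sized (r + 1)) :
    ∃ x : ℕ, x.choose (r + 1) ≤ #𝒜 ∧ (r + 1) * #𝒜 ≤ (x + 1) * #(∂ 𝒜) := by
  obtain ⟨x, hrx, hx𝒜, h𝒜x⟩ := exists_choose_le_lt_choose_add_one #𝒜 r
  refine ⟨x, hx𝒜, ?_⟩
  rcases hrx.eq_or_lt with rfl | hrx
  · have h𝒜₀ : #𝒜 = 0 := by simpa using h𝒜x
    simp [h𝒜₀]
  · calc (r + 1) * #𝒜 ≤ (r + 1) * (x + 1).choose (r + 1) := by gcongr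
      _ = (x + 1) * x.choose r := by rw [Nat.add_one_mul_choose_eq, mul_comm]
      _ ≤ (x + 1) * #(∂ 𝒜) := by
        gcongr
        exact choose_le_card_shadow h𝒜 hrx hx𝒜

lemma card_shadow_le_choose {s : Finset α} (h𝒜 : 𝒜 ⊆ powersetCard (r + 1) s) :
    #(∂ 𝒜) ≤ (#s).choose r := by
  rw [← card_powersetCard]
  refine card_le_card fun t ht => ?_
  obtain ⟨a, ha, hta, hcard⟩ := mem_shadow_iff_exists_mem_card_add_one.1 ht
  obtain ⟨has, har⟩ := mem_powersetCard.1 (h𝒜 ha)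
  exact mem_powersetCard.2 ⟨hta.trans has, by lia⟩

variable {ι : Type*} [DecidableEq ι] {c : Finset α → ι}

lemma disjoint_shadow_fibers (h𝒜 : (𝒜 : Set (Finset α)).Sized (r + 1))
    (hc : ∀ a ∈ 𝒜, ∀ b ∈ 𝒜, r ≤ #(a ∩ b) → c a = c b) {i j : ι} (hij : i ≠ j) :
    Disjoint (∂ {a ∈ 𝒜 | c a = i}) (∂ {a ∈ 𝒜 | c a = j}) := by
  refine disjoint_left.2 fun t hti htj => hij ?_
  obtain ⟨a, ha, hta, hat⟩ := mem_shadow_iff_exists_mem_card_add_one.1 hti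
  obtain ⟨b, hb, htb, -⟩ := mem_shadow_iff_exists_mem_card_add_one.1 htj
  obtain ⟨ha, hai⟩ := mem_filter.1 ha
  obtain ⟨hb, hbj⟩ := mem_filter.1 hb
  have hr : #t = r := Nat.add_right_cancel (hat.symm.trans (h𝒜 ha))
  rw [← hai, ← hbj]
  exact hc a ha b hb (hr ▸ card_le_card (subset_inter hta htb))

lemma sum_card_shadow_fibers_le (h𝒜 : (𝒜 : Set (Finset α)).Sized (r + 1))
    (hc : ∀ a ∈ 𝒜, ∀ b ∈ 𝒜, r ≤ #(a ∩ b) → c a = c b) :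
    ∑ i ∈ 𝒜.image c, #(∂ {a ∈ 𝒜 | c a = i}) ≤ #(∂ 𝒜) := by
  rw [← card_biUnion fun i _ j _ => disjoint_shadow_fibers h𝒜 hc]
  exact card_le_card (biUnion_subset.2 fun i _ => shadow_mono (filter_subset _ _))

-- The ratio `#𝒜 / #(∂ 𝒜)` is a mediant of the ratios of the fibers, so some fiber has at least it.
theorem exists_fiber_choose_le_card [Finite α] [Nonempty ι]
    (h𝒜 : (𝒜 : Set (Finset α)).Sized (r + 1))
    (hc : ∀ a ∈ 𝒜, ∀ b ∈ 𝒜, r ≤ #(a ∩ b) → c a = c b) :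
    ∃ (i : ι) (x : ℕ), x.choose (r + 1) ≤ #{a ∈ 𝒜 | c a = i} ∧
      (r + 1) * #𝒜 ≤ (x + 1) * #(∂ 𝒜) := by
  rcases 𝒜.eq_empty_or_nonempty with rfl | hne
  · exact ⟨Classical.arbitrary ι, 0, by simp⟩
  have hfiber (i : ι) := exists_choose_le_card_and_mul_card_le_mul_card_shadow
    (h𝒜.mono (coe_subset.2 (filter_subset (c · = i) 𝒜)))
  choose x hx_card hx_shadow using hfiber
  obtain ⟨i, -, hmax⟩ := exists_max_image (𝒜.image c) x (hne.image c)
  refine ⟨i, x i, hx_card i, ?_⟩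
  calc (r + 1) * #𝒜 = ∑ j ∈ 𝒜.image c, (r + 1) * #{a ∈ 𝒜 | c a = j} := by
        rw [← mul_sum, ← card_eq_sum_card_image]
    _ ≤ ∑ j ∈ 𝒜.image c, (x i + 1) * #(∂ {a ∈ 𝒜 | c a = j}) := by
        refine sum_le_sum fun j hj => (hx_shadow j).trans ?_
        gcongr
        exact hmax j hj
    _ ≤ (x i + 1) * #(∂ 𝒜) := by
        rw [← mul_sum]
        gcongr
        exact sum_card_shadow_fibers_le h𝒜 hc

end KruskalKatona

section Exchange

variable {α : Type*} [DecidableEq α]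

theorem exchange_induction {d : ℕ} {P : Finset α → Prop}
    (exchange : ∀ D D', #D = d → #D' = d → #(D ∩ D') + 1 = d → P D → P D')
    {D D' : Finset α} (hD : #D = d) (hD' : #D' = d) (h : P D) : P D' := by
  induction hm : #(D \ D') generalizing D with
  | zero =>
    have hsub : D ⊆ D' := sdiff_eq_empty_iff_subset.1 (card_eq_zero.1 hm)
    rwa [← eq_of_subset_of_card_le hsub (hD'.trans hD.symm).le]
  | succ m ih =>
    obtain ⟨a, ha⟩ : (D \ D').Nonempty := card_pos.1 (by lia)
    obtain ⟨b, hb⟩ : (D' \ D).Nonempty :=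
      card_pos.1 (by rw [← card_sdiff_comm (hD.trans hD'.symm)]; lia)
    obtain ⟨haD, -⟩ := mem_sdiff.1 ha
    obtain ⟨hbD', hbD⟩ := mem_sdiff.1 hb
    have hcard_erase := card_erase_add_one haD
    have hcard : #(insert b (D.erase a)) = d := by
      rw [card_insert_of_notMem (fun hb => hbD (mem_of_mem_erase hb)), hcard_erase, hD]
    have hinter : D ∩ insert b (D.erase a) = D.erase a := by
      rw [inter_insert_of_notMem hbD, inter_eq_right.2 (erase_subset a D)]
    have hsdiff : insert b (D.erase a) \ D' = (D \ D').erase a := by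
      rw [insert_sdiff_of_mem _ hbD', erase_sdiff_comm]
    refine ih hcard (exchange D _ hD hcard (by rw [hinter, hcard_erase, hD]) h) ?_
    rw [hsdiff, card_erase_of_mem ha, hm, Nat.add_sub_cancel]

end Exchange

section Link

variable {α : Type*} [DecidableEq α] {𝒜 : Finset (Finset α)} {D a : Finset α}

/-- The link of `D` in the set family `𝒜`: the sets that, together with the disjoint set `D`,
form a member of `𝒜`. Its cardinality is the degree of `D` in the hypergraph `𝒜`. -/
def link (𝒜 : Finset (Finset α)) (D : Finset α) : Finset (Finset α) :=
  {e ∈ 𝒜 | D ⊆ e}.image (· \ D)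

lemma mem_link : a ∈ link 𝒜 D ↔ Disjoint a D ∧ a ∪ D ∈ 𝒜 := by
  simp only [link, mem_image, mem_filter]
  constructor
  · rintro ⟨e, ⟨he, hDe⟩, rfl⟩
    exact ⟨sdiff_disjoint, by rwa [sdiff_union_of_subset hDe]⟩
  · rintro ⟨hdisj, he⟩
    exact ⟨a ∪ D, ⟨he, subset_union_right⟩, union_sdiff_cancel_right hdisj⟩

lemma card_link (𝒜 : Finset (Finset α)) (D : Finset α) : #(link 𝒜 D) = #{e ∈ 𝒜 | D ⊆ e} := by
  refine card_image_of_injOn fun e he f hf hef => ?_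
  rw [← sdiff_union_of_subset (mem_filter.1 he).2, ← sdiff_union_of_subset (mem_filter.1 hf).2]
  exact congrArg (· ∪ D) hef

lemma link_subset_powersetCard [Fintype α] {d r : ℕ} (h𝒜 : (𝒜 : Set (Finset α)).Sized (d + r))
    (hD : #D = d) : link 𝒜 D ⊆ powersetCard r Dᶜ := by
  intro a ha
  obtain ⟨hdisj, he⟩ := mem_link.1 ha
  have hcard := card_union_of_disjoint hdisj
  have hsize := h𝒜 he
  exact mem_powersetCard.2 ⟨subset_compl_iff_disjoint_right.2 hdisj, by lia⟩

end Link

section TightComponent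

variable {V : Type*} [DecidableEq V] {k d r : ℕ} {E : Finset (Finset V)} {e f : Finset V}

/-- The graph on the vertex sets whose adjacency is tight adjacency of edges of the `k`-graph `E`;
sets outside `E` are isolated vertices. -/
def tightGraph (k : ℕ) (E : Finset (Finset V)) : SimpleGraph (Finset V) where
  Adj e f := e ≠ f ∧ e ∈ E ∧ f ∈ E ∧ #(e ∩ f) = k - 1
  symm := ⟨fun _ _ ⟨hne, he, hf, hcard⟩ => ⟨hne.symm, hf, he, by rwa [inter_comm]⟩⟩
  loopless := ⟨fun _ h => h.1 rfl⟩

open Classical in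
/-- The tight component of the `k`-graph `E` given by a connected component of `tightGraph k E`.
It is empty for the components that consist of a set outside `E`. -/
noncomputable def tightComponent (c : (tightGraph k E).ConnectedComponent) :
    Finset (Finset V) :=
  {e ∈ E | (tightGraph k E).connectedComponentMk e = c}

lemma mem_tightComponent {c : (tightGraph k E).ConnectedComponent} :
    e ∈ tightComponent c ↔ e ∈ E ∧ (tightGraph k E).connectedComponentMk e = c := by
  simp only [tightComponent, mem_filter]

lemma tightComponent_subset (c : (tightGraph k E).ConnectedComponent) : tightComponent c ⊆ E :=
  fun _ he => (mem_tightComponent.1 he).1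

lemma mem_tightComponent_of_reachable {c : (tightGraph k E).ConnectedComponent}
    (he : e ∈ tightComponent c) (hef : (tightGraph k E).Reachable e f) :
    f ∈ tightComponent c := by
  obtain ⟨walk⟩ := hef
  induction walk with
  | nil => exact he
  | cons hadj _ ih =>
    exact ih (mem_tightComponent.2 ⟨hadj.2.2.1,
      (SimpleGraph.ConnectedComponent.sound hadj.reachable).symm.trans
        (mem_tightComponent.1 he).2⟩)

theorem tightConn_tightComponent (c : (tightGraph k E).ConnectedComponent) :
    TightConn k (tightComponent c) := by
  intro e he f hf
  obtain ⟨-, rfl⟩ := mem_tightComponent.1 hf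
  obtain ⟨walk⟩ := SimpleGraph.ConnectedComponent.exact (mem_tightComponent.1 he).2
  exact ⟨walk.length, walk.getVert, walk.getVert_zero, walk.getVert_length,
    fun i _ => mem_tightComponent_of_reachable he (walk.take i).reachable,
    fun i hi => (walk.adj_getVert_succ hi).2.2.2⟩

lemma connectedComponentMk_eq_of_le_card_inter (hE : (E : Set (Finset V)).Sized k)
    (he : e ∈ E) (hf : f ∈ E) (h : k ≤ #(e ∩ f) + 1) :
    (tightGraph k E).connectedComponentMk e = (tightGraph k E).connectedComponentMk f := by
  rcases eq_or_ne e f with rfl | hne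
  · rfl
  have hnot : ¬ e ⊆ f := fun hef => hne (eq_of_subset_of_card_le hef (by rw [hE he, hE hf]))
  have hlt : #(e ∩ f) < #e :=
    card_lt_card (inter_subset_left.ssubset_of_ne (inter_eq_left.not.2 hnot))
  rw [hE he] at hlt
  exact SimpleGraph.ConnectedComponent.sound
    (SimpleGraph.Adj.reachable ⟨hne, he, hf, by lia⟩)

variable [Fintype V] {D D' : Finset V}

theorem exists_tightComponent_choose_le_card_link (hE : (E : Set (Finset V)).Sized (d + (r + 1)))
    (hD : #D = d) :
    ∃ (c : (tightGraph (d + (r + 1)) E).ConnectedComponent) (x : ℕ),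
      x.choose (r + 1) ≤ #(link (tightComponent c) D) ∧
      (r + 1) * #(link E D) ≤ (x + 1) * (Fintype.card V - d).choose r := by
  classical
  have hlink := link_subset_powersetCard hE hD
  have hcolor : ∀ a ∈ link E D, ∀ b ∈ link E D, r ≤ #(a ∩ b) →
      (tightGraph (d + (r + 1)) E).connectedComponentMk (a ∪ D) =
        (tightGraph (d + (r + 1)) E).connectedComponentMk (b ∪ D) := by
    intro a ha b hb hab
    obtain ⟨hdisj, haE⟩ := mem_link.1 ha
    refine connectedComponentMk_eq_of_le_card_inter hE haE (mem_link.1 hb).2 ?_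
    rw [← inter_union_distrib_right,
      card_union_of_disjoint (hdisj.mono_left inter_subset_left)]
    lia
  obtain ⟨c, x, hx, hshadow⟩ :=
    exists_fiber_choose_le_card (fun _ ha => (mem_powersetCard.1 (hlink ha)).2) hcolor
  have hfiber : link (tightComponent c) D =
      {a ∈ link E D | (tightGraph (d + (r + 1)) E).connectedComponentMk (a ∪ D) = c} := by
    ext a
    simp only [mem_link, mem_tightComponent, mem_filter, and_assoc]
  refine ⟨c, x, hfiber ▸ hx, hshadow.trans ?_⟩
  rw [← hD, ← card_compl]
  gcongr
  exact card_shadow_le_choose hlink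

theorem exists_mul_choose_le_card_link_tightComponent {δ ε : ℝ} (hδ₀ : 0 ≤ δ) (hδ₁ : δ ≤ 1)
    (hε : 0 < ε) (hcard : (2 + ε) * (r + 1) ≤ ε / 2 * (Fintype.card V - d : ℕ))
    (hE : (E : Set (Finset V)).Sized (d + (r + 1))) (hD : #D = d)
    (hdeg : (δ + ε) * (Fintype.card V - d).choose (r + 1) ≤ #(link E D)) :
    ∃ c : (tightGraph (d + (r + 1)) E).ConnectedComponent,
      (1 + ε / 2) * δ ^ (r + 1) * (Fintype.card V - d).choose (r + 1) ≤
        #(link (tightComponent c) D) := by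
  obtain ⟨c, x, hx, hshadow⟩ := exists_tightComponent_choose_le_card_link hE hD
  set m := Fintype.card V - d
  have hrm : r < m := lt_of_two_add_mul_le_half_mul hε hcard
  have hmx : (δ + ε) * (m - r) ≤ x + 1 :=
    mul_sub_le_of_mul_choose_le hrm.le hdeg (mod_cast hshadow)
  have hslack : (δ + ε / 2) * m ≤ x - r := by
    have hδr : δ * r ≤ r := mul_le_of_le_one_left r.cast_nonneg hδ₁
    linarith
  refine ⟨c, ?_⟩
  calc (1 + ε / 2) * δ ^ (r + 1) * m.choose (r + 1)
      ≤ (δ + ε / 2) ^ (r + 1) * m.choose (r + 1) := by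
        gcongr
        exact one_add_mul_pow_le_add_pow hδ₀ hδ₁ (half_pos hε).le r
    _ ≤ x.choose (r + 1) := pow_mul_choose_le_choose (by positivity) hslack
    _ ≤ #(link (tightComponent c) D) := mod_cast hx

theorem eq_of_choose_lt_card_link_add_card_link (hE : (E : Set (Finset V)).Sized (d + r))
    (hD : #D = d) (hD' : #D' = d) (hDD' : #(D ∩ D') + 1 = d)
    {c c' : (tightGraph (d + r) E).ConnectedComponent}
    (h : (Fintype.card V - d + 1).choose r <
      #(link (tightComponent c) D) + #(link (tightComponent c') D')) :
    c = c' := by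
  have hcard : #(D ∩ D')ᶜ = Fintype.card V - d + 1 := by
    have := card_le_univ D
    rw [card_compl]
    lia
  have hlink : ∀ {A : Finset V} (c : (tightGraph (d + r) E).ConnectedComponent), #A = d →
      D ∩ D' ⊆ A → link (tightComponent c) A ⊆ powersetCard r (D ∩ D')ᶜ := fun c hA hsub =>
    (link_subset_powersetCard (hE.mono (coe_subset.2 (tightComponent_subset c))) hA).trans
      (powersetCard_mono (compl_subset_compl.2 hsub))
  obtain ⟨a, ha⟩ := inter_nonempty_of_card_lt_card_add_card (hlink c hD inter_subset_left)
    (hlink c' hD' inter_subset_right) (by rwa [card_powersetCard, hcard])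
  obtain ⟨haD, haD'⟩ := mem_inter.1 ha
  obtain ⟨hdisj, hac⟩ := mem_link.1 haD
  obtain ⟨haE, rfl⟩ := mem_tightComponent.1 hac
  obtain ⟨haE', rfl⟩ := mem_tightComponent.1 (mem_link.1 haD').2
  refine connectedComponentMk_eq_of_le_card_inter hE haE haE' ?_
  have haE_card : #(a ∪ D) = d + r := hE haE
  rw [card_union_of_disjoint hdisj] at haE_card
  rw [← union_inter_distrib_left, card_union_of_disjoint (hdisj.mono_right inter_subset_left)]
  lia

theorem exists_tightComponent_forall_mul_choose_le_card_link {δ ε : ℝ} (hδ₀ : 0 ≤ δ)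
    (hδ₁ : δ ≤ 1) (hδ : 1 / 2 ≤ δ ^ (r + 1)) (hε : 0 < ε)
    (hcard : (2 + ε) * (r + 1) ≤ ε / 2 * (Fintype.card V - d : ℕ))
    (hE : (E : Set (Finset V)).Sized (d + (r + 1)))
    (hdeg : ∀ D : Finset V, #D = d →
      (δ + ε) * (Fintype.card V - d).choose (r + 1) ≤ #(link E D)) :
    ∃ c : (tightGraph (d + (r + 1)) E).ConnectedComponent, ∀ D : Finset V, #D = d →
      (1 + ε / 2) * δ ^ (r + 1) * (Fintype.card V - d).choose (r + 1) ≤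
        #(link (tightComponent c) D) := by
  have hlarge (D : Finset V) (hD : #D = d) :=
    exists_mul_choose_le_card_link_tightComponent hδ₀ hδ₁ hε hcard hE hD (hdeg D hD)
  set m := Fintype.card V - d
  have hrm : r < m := lt_of_two_add_mul_le_half_mul hε hcard
  have hchoose : ((m + 1).choose (r + 1) : ℝ) < (1 + ε / 2) * m.choose (r + 1) := by
    refine choose_add_one_lt_one_add_mul_choose hrm.le ?_
    have hεr : 0 ≤ ε * r := by positivity
    linarith
  have hhalf : (1 + ε / 2) * m.choose (r + 1) ≤
      2 * ((1 + ε / 2) * δ ^ (r + 1) * m.choose (r + 1)) :=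
    calc (1 + ε / 2) * m.choose (r + 1)
        = 2 * ((1 + ε / 2) * (1 / 2) * m.choose (r + 1)) := by ring
      _ ≤ 2 * ((1 + ε / 2) * δ ^ (r + 1) * m.choose (r + 1)) := by gcongr
  have hdV : d ≤ #(univ : Finset V) := by
    rw [card_univ]
    lia
  obtain ⟨D₀, -, hD₀⟩ := exists_subset_card_eq hdV
  obtain ⟨c, hc⟩ := hlarge D₀ hD₀
  refine ⟨c, fun D hD => exchange_induction
    (P := fun D => (1 + ε / 2) * δ ^ (r + 1) * m.choose (r + 1) ≤ #(link (tightComponent c) D))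
    (fun D D' hD hD' hDD' hcD => ?_) hD₀ hD hc⟩
  obtain ⟨c', hc'⟩ := hlarge D' hD'
  have hlt : ((m + 1).choose (r + 1) : ℝ) <
      #(link (tightComponent c) D) + #(link (tightComponent c') D') := by linarith
  obtain rfl := eq_of_choose_lt_card_link_add_card_link hE hD hD' hDD' (mod_cast hlt)
  exact hc'

end TightComponent

theorem stmt_13_general.{u} {k d : ℕ} (hdk : d < k) {ε : ℝ} (hε : 0 < ε) :
    ∃ n₀ : ℕ, ∀ (V : Type u) [Fintype V] [DecidableEq V], n₀ ≤ Fintype.card V →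
    ∀ E : Finset (Finset V), (∀ e ∈ E, #e = k) →
    ∀ δ : ℝ, (2 : ℝ) ^ (-(1 : ℝ) / ((k : ℝ) - (d : ℝ))) ≤ δ → δ ≤ 1 →
    (∀ D : Finset V, #D = d →
      (δ + ε) * (Fintype.card V - d).choose (k - d) ≤ #{e ∈ E | D ⊆ e}) →
    ∃ C ⊆ E, TightConn k C ∧ ∀ D : Finset V, #D = d →
      δ ^ (k - d) * (Fintype.card V - d).choose (k - d) ≤ #{e ∈ C | D ⊆ e} := by
  obtain ⟨r, rfl⟩ : ∃ r, k = d + (r + 1) := ⟨k - d - 1, by lia⟩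
  obtain ⟨M, hM⟩ := exists_nat_ge ((2 + ε) * (r + 1) / (ε / 2))
  rw [div_le_iff₀' (half_pos hε)] at hM
  refine ⟨d + M, fun V _ _ hn E hE δ hδ hδ₁ hdeg => ?_⟩
  have hcard : (2 + ε) * (r + 1) ≤ ε / 2 * (Fintype.card V - d : ℕ) := by
    have hMn : (M : ℝ) ≤ (Fintype.card V - d : ℕ) := mod_cast Nat.le_sub_of_add_le' hn
    exact hM.trans (by gcongr)
  have hexp : ((d + (r + 1) : ℕ) : ℝ) - d = (r + 1 : ℕ) := by
    rw [Nat.cast_add, add_sub_cancel_left]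
  have hδ₀ : 0 ≤ δ := (Real.rpow_nonneg zero_le_two _).trans hδ
  have hhalf := half_le_pow_of_two_rpow_le r.succ_ne_zero (hexp ▸ hδ)
  simp only [Nat.add_sub_cancel_left, ← card_link] at hdeg ⊢
  obtain ⟨c, hc⟩ := exists_tightComponent_forall_mul_choose_le_card_link hδ₀ hδ₁ hhalf hε hcard
    (fun _ he => hE _ he) hdeg
  refine ⟨tightComponent c, tightComponent_subset c, tightConn_tightComponent c,
    fun D hD => le_trans ?_ (hc D hD)⟩
  gcongr
  exact le_mul_of_one_le_left (by positivity) (by linarith)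

end

/-- For all `1 ≤ d < k` and `ε > 0` there exists `n0` such that for every
`n ≥ n0` and every `δ ∈ [2^{−1/(k−d)}, 1]`, every `k`-graph on `n` vertices with
`δ_d(G) ≥ (δ+ε)·C(n−d,k−d)` contains a tight-connected set of edges `C ⊆ E(G)` such that every
`d`-element vertex set is contained in at least `δ^{k−d}·C(n−d,k−d)` edges of `C`. -/
theorem stmt_13 (k d : ℕ) (hd : 1 ≤ d) (hdk : d < k) (ε : ℝ) (hε : 0 < ε) :
    ∃ n0 : ℕ, ∀ n : ℕ, n0 ≤ n →
    ∀ (V : Type) [Fintype V] [DecidableEq V], Fintype.card V = n →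
    ∀ E : Finset (Finset V), (∀ e ∈ E, e.card = k) →
    ∀ δ : ℝ, (2 : ℝ) ^ (-(1 : ℝ) / ((k : ℝ) - (d : ℝ))) ≤ δ → δ ≤ 1 →
    (∀ D : Finset V, D.card = d →
      (δ + ε) * ((n - d).choose (k - d) : ℝ) ≤ ((E.filter (fun e => D ⊆ e)).card : ℝ)) →
    ∃ C : Finset (Finset V), C ⊆ E ∧ TightConn k C ∧
      ∀ D : Finset V, D.card = d →
        δ ^ (k - d) * ((n - d).choose (k - d) : ℝ) ≤
          ((C.filter (fun e => D ⊆ e)).card : ℝ) := by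
  obtain ⟨n₀, h⟩ := stmt_13_general hdk hε
  exact ⟨n₀, by rintro n hn V _ _ rfl; exact h V hn⟩
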